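/- arXiv:2202.01278 — 3 statements merged into one kernel-verified Lean document; each statement's English description precedes it below -/
import Mathlib

section
/- Let m ∈ ℕ, let α > 0, and let n ≥ m. Then for every x > 0, x^α · L^{I,(α)}_{m,n}(x) = (α+n) · ∫_0^x t^{α−1} · L_m^{(α−1)}(−t) · L_{n−m}^{(α−1)}(t) dt. -/
open Finset MeasureTheory

/-- Generalized binomial coefficient `C(t, j) = t(t-1)⋯(t-j+1)/j!`. -/
noncomputable def genBinom (t : ℝ) (j : ℕ) : ℝ :=
  (∏ i ∈ Finset.range j, (t - i)) / (Nat.factorial j)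

/-- Generalized Laguerre polynomial `L_n^{(α)}(x)`, with the convention
`L_n^{(α)} = 0` for negative integer index `n`. -/
noncomputable def laguerre (α : ℝ) (n : ℤ) (x : ℝ) : ℝ :=
  if 0 ≤ n then
    ∑ k ∈ Finset.range (n.toNat + 1),
      ((-1 : ℝ) ^ k / (Nat.factorial k)) * genBinom ((n : ℝ) + α) (n.toNat - k) * x ^ k
  else 0

/-- Type-I exceptional `X_m`-Laguerre polynomial. -/
noncomputable def XLagI (m : ℕ) (α : ℝ) (n : ℕ) (x : ℝ) : ℝ :=
  laguerre α (m : ℤ) (-x) * laguerre (α - 1) ((n : ℤ) - m) x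
    + laguerre (α - 1) (m : ℤ) (-x) * laguerre α ((n : ℤ) - m - 1) x

lemma laguerre_nat (a : ℝ) (n : ℕ) (x : ℝ) : laguerre a (n : ℤ) x =
    ∑ k ∈ Finset.range (n + 1),
      ((-1 : ℝ) ^ k / (Nat.factorial k)) * genBinom ((n : ℝ) + a) (n - k) * x ^ k := by
  simp [laguerre]

lemma laguerre_neg_one (a : ℝ) (x : ℝ) : laguerre a (-1) x = 0 := by
  simp [laguerre]

lemma prod_shift (t : ℝ) (j : ℕ) :
    (∏ i ∈ Finset.range j, (t - i)) * (t - j) = t * ∏ i ∈ Finset.range j, (t - 1 - i) := by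
  rw [← Finset.prod_range_succ (fun i : ℕ => t - (i : ℝ)), Finset.prod_range_succ', mul_comm]
  simp only [Nat.cast_zero, sub_zero]
  congr 1
  apply Finset.prod_congr rfl
  intro i _
  push_cast
  ring

lemma genBinom_absorb (t : ℝ) (j : ℕ) : (t - j) * genBinom t j = t * genBinom (t - 1) j := by
  unfold genBinom
  rw [← mul_div_assoc, ← mul_div_assoc, ← prod_shift, mul_comm]

lemma genBinom_pascal (t : ℝ) (j : ℕ) :
    genBinom t (j + 1) = genBinom (t - 1) (j + 1) + genBinom (t - 1) j := by
  have h := prod_shift t j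
  have hf : (Nat.factorial j : ℝ) ≠ 0 := by positivity
  have hj : (j : ℝ) + 1 ≠ 0 := by positivity
  unfold genBinom
  rw [Finset.prod_range_succ, Finset.prod_range_succ, h, Nat.factorial_succ]
  push_cast
  field_simp
  ring

lemma laguerre_hasDerivAt' (a : ℝ) (n : ℕ) (x : ℝ) : HasDerivAt (laguerre a (n : ℤ))
    (∑ k ∈ Finset.range (n + 1),
      ((-1 : ℝ) ^ k / (Nat.factorial k)) * genBinom ((n : ℝ) + a) (n - k) *
        (k * x ^ (k - 1))) x := by
  have : laguerre a (n : ℤ) = fun x => ∑ k ∈ Finset.range (n + 1),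
      ((-1 : ℝ) ^ k / (Nat.factorial k)) * genBinom ((n : ℝ) + a) (n - k) * x ^ k := by
    funext y
    exact laguerre_nat a n y
  rw [this]
  apply HasDerivAt.fun_sum
  intro k _
  exact (hasDerivAt_pow k x).const_mul _

lemma laguerre_hasDerivAt (a : ℝ) (n : ℕ) (x : ℝ) : HasDerivAt (laguerre a (n : ℤ))
    (-laguerre (a + 1) ((n : ℤ) - 1) x) x := by
  convert laguerre_hasDerivAt' a n x using 1
  rw [Finset.sum_range_succ']
  rcases n with _ | n
  · simp [laguerre]
  · have : ((n + 1 : ℕ) : ℤ) - 1 = (n : ℤ) := by push_cast; ring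
    rw [this, laguerre_nat, ← Finset.sum_neg_distrib]
    simp only [Nat.cast_zero, zero_mul, mul_zero, add_zero]
    apply Finset.sum_congr rfl
    intro k _
    have hf : (Nat.factorial k : ℝ) ≠ 0 := by positivity
    have hj : (k : ℝ) + 1 ≠ 0 := by positivity
    rw [Nat.factorial_succ, Nat.add_sub_add_right, Nat.add_sub_cancel]
    push_cast
    rw [show (n : ℝ) + 1 + a = n + (a + 1) by ring]
    field_simp
    ring

lemma laguerre_euler (a : ℝ) (n : ℕ) (x : ℝ) :
    a * laguerre a (n : ℤ) x - x * laguerre (a + 1) ((n : ℤ) - 1) x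
      = (n + a) * laguerre (a - 1) (n : ℤ) x := by
  have h := (laguerre_hasDerivAt a n x).unique (laguerre_hasDerivAt' a n x)
  rw [sub_eq_add_neg, ← mul_neg, h, laguerre_nat, laguerre_nat, Finset.mul_sum, Finset.mul_sum,
    Finset.mul_sum, ← Finset.sum_add_distrib]
  apply Finset.sum_congr rfl
  intro k hk
  have hkn : k ≤ n := by simpa [Nat.lt_succ_iff] using hk
  have hb := genBinom_absorb ((n : ℝ) + a) (n - k)
  rw [Nat.cast_sub hkn] at hb
  rw [show (n : ℝ) + (a - 1) = n + a - 1 by ring]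
  have hx : x * (k * x ^ (k - 1)) = k * x ^ k := by
    rcases k with _ | k
    · simp
    · rw [Nat.add_sub_cancel, pow_succ]; ring
  linear_combination ((-1 : ℝ) ^ k / (Nat.factorial k)) * x ^ k * hb +
    ((-1 : ℝ) ^ k / (Nat.factorial k)) * genBinom ((n : ℝ) + a) (n - k) * hx

lemma laguerre_pascal (a : ℝ) (n : ℕ) (x : ℝ) :
    laguerre a (n : ℤ) x = laguerre (a - 1) (n : ℤ) x + laguerre a ((n : ℤ) - 1) x := by
  rcases n with _ | n
  · simp [laguerre, genBinom]
  · have : ((n + 1 : ℕ) : ℤ) - 1 = (n : ℤ) := by push_cast; ring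
    rw [this, laguerre_nat, laguerre_nat, laguerre_nat, Finset.sum_range_succ,
      Finset.sum_range_succ _ (n + 1), add_right_comm, ← Finset.sum_add_distrib]
    congr 1
    · apply Finset.sum_congr rfl
      intro k hk
      have hkn : k ≤ n := by simpa [Nat.lt_succ_iff] using hk
      have hb := genBinom_pascal ((n : ℝ) + 1 + a) (n - k)
      rw [Nat.succ_sub hkn]
      push_cast
      rw [Nat.succ_eq_add_one, hb, show (n : ℝ) + 1 + a - 1 = n + a by ring,
        show (n : ℝ) + 1 + (a - 1) = n + a by ring]
      ring
    · simp [genBinom]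

lemma laguerre_hasDerivAt_pred (a : ℝ) (n : ℕ) (x : ℝ) : ∃ d,
    HasDerivAt (laguerre a ((n : ℤ) - 1)) d x := by
  rcases n with _ | n
  · refine ⟨0, ?_⟩
    have : laguerre a (((0 : ℕ) : ℤ) - 1) = fun _ => 0 := by
      funext y
      simp [laguerre]
    rw [this]
    exact hasDerivAt_const x 0
  · have : ((n + 1 : ℕ) : ℤ) - 1 = (n : ℤ) := by push_cast; ring
    rw [this]
    exact ⟨_, laguerre_hasDerivAt a n x⟩

lemma laguerre_continuous (a : ℝ) (n : ℕ) : Continuous (laguerre a (n : ℤ)) :=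
  continuous_iff_continuousAt.2 fun x => (laguerre_hasDerivAt a n x).continuousAt

/-- The derivative of the exceptional polynomial, up to the Euler weight. -/
lemma X_deriv (m N : ℕ) (α x : ℝ) : ∃ d,
    HasDerivAt (fun x => laguerre α (m : ℤ) (-x) * laguerre (α - 1) (N : ℤ) x
      + laguerre (α - 1) (m : ℤ) (-x) * laguerre α ((N : ℤ) - 1) x) d x ∧
    α * (laguerre α (m : ℤ) (-x) * laguerre (α - 1) (N : ℤ) x
      + laguerre (α - 1) (m : ℤ) (-x) * laguerre α ((N : ℤ) - 1) x) + x * d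
      = (α + m + N) * (laguerre (α - 1) (m : ℤ) (-x) * laguerre (α - 1) (N : ℤ) x) := by
  obtain ⟨B', hB⟩ := laguerre_hasDerivAt_pred α N x
  have hA := (laguerre_hasDerivAt α m (-x)).comp x (hasDerivAt_neg x)
  have ha := (laguerre_hasDerivAt (α - 1) m (-x)).comp x (hasDerivAt_neg x)
  have hb := laguerre_hasDerivAt (α - 1) N x
  rw [sub_add_cancel] at ha hb
  refine ⟨_, (hA.mul hb).add (ha.mul hB), ?_⟩
  -- derivative of `L_N^α = L_N^(α-1) + L_(N-1)^α`
  have hsum : -laguerre (α + 1) ((N : ℤ) - 1) x = -laguerre α ((N : ℤ) - 1) x + B' := by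
    refine (laguerre_hasDerivAt α N x).unique ?_
    have : laguerre α (N : ℤ) = fun y => laguerre (α - 1) (N : ℤ) y + laguerre α ((N : ℤ) - 1) y := by
      funext y
      exact laguerre_pascal α N y
    rw [this]
    exact hb.add hB
  have e1 := laguerre_euler α N x
  have p1 := laguerre_pascal α N x
  have e2 := laguerre_euler α m (-x)
  have p2 := laguerre_pascal α m (-x)
  simp only [Function.comp]
  generalize laguerre (α + 1) ((N : ℤ) - 1) x = q at *
  generalize laguerre (α + 1) ((m : ℤ) - 1) (-x) = r at *
  generalize laguerre α ((m : ℤ) - 1) (-x) = a' at *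
  generalize laguerre α ((N : ℤ) - 1) x = B at *
  generalize laguerre α (m : ℤ) (-x) = A at *
  generalize laguerre (α - 1) (m : ℤ) (-x) = a at *
  generalize laguerre (α - 1) (N : ℤ) x = b at *
  generalize laguerre α (N : ℤ) x = f at *
  linear_combination b * e2 + a * e1 - α * a * p1 - x * a * hsum - x * B * p2

theorem stmt0 (m : ℕ) (α : ℝ) (hα : 0 < α) (n : ℕ) (hmn : m ≤ n) :
    ∀ x : ℝ, 0 < x →
      x ^ α * XLagI m α n x =
        (α + n) * ∫ t in (0 : ℝ)..x,
          t ^ (α - 1) * laguerre (α - 1) (m : ℤ) (-t) * laguerre (α - 1) ((n : ℤ) - m) t := by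
  intro x hx
  obtain ⟨N, rfl⟩ := Nat.exists_eq_add_of_le hmn
  have hN : ((m + N : ℕ) : ℤ) - m = (N : ℤ) := by push_cast; ring
  unfold XLagI
  rw [hN]
  choose d hd hd' using X_deriv m N α
  rw [← intervalIntegral.integral_const_mul]
  have hXc := continuous_iff_continuousAt.2 fun y => (hd y).continuousAt
  rw [intervalIntegral.integral_eq_sub_of_hasDerivAt_of_le
    (f := fun y => y ^ α * (laguerre α (m : ℤ) (-y) * laguerre (α - 1) (N : ℤ) y
      + laguerre (α - 1) (m : ℤ) (-y) * laguerre α ((N : ℤ) - 1) y)) hx.le]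
  · simp [Real.zero_rpow hα.ne']
  · exact ((Real.continuous_rpow_const hα.le).mul hXc).continuousOn
  · intro y hy
    have h := (Real.hasDerivAt_rpow_const (p := α) (Or.inl hy.1.ne')).mul (hd y)
    refine h.congr_deriv ?_
    have hp : y ^ α = y ^ (α - 1) * y := by
      rw [← Real.rpow_add_one hy.1.ne', sub_add_cancel]
    rw [hp]
    push_cast
    linear_combination (y ^ (α - 1)) * hd' y
  · apply IntervalIntegrable.const_mul
    simp only [mul_assoc]
    apply (intervalIntegral.intervalIntegrable_rpow' (by linarith)).mul_continuousOn
    exact (((laguerre_continuous _ m).comp continuous_neg).mul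
      (laguerre_continuous _ N)).continuousOn
end

section
/- Let m ∈ ℕ, let α ∈ (−1,0), and let n > m. Let y_1,…,y_m ∈ ℂ list the roots of L_m^{(−α−1)} with multiplicity, i.e., L_m^{(−α−1)}(X) = ((−1)^m/m!)·∏_{j=1}^m (X−y_j), and let z_1,…,z_{n−m−1} ∈ ℂ list the roots of L_{n−m−1}^{(α+1)} with multiplicity similarly. Set Z_j = −y_j for 1 ≤ j ≤ m and Z_{m+j} = z_j for 1 ≤ j ≤ n−m−1. For x ∈ ℂ let M(x) be the n×n matrix whose j-th row, for 1 ≤ j ≤ n−1, is (1, Z_j, Z_j², …, Z_j^{n−1}), and whose last row is (1, x/2, x²/3, …, x^{n−1}/n). Then for every x ∈ ℂ, m!·(n−m−1)!·(∏_{1≤i<j≤n−1}(Z_j−Z_i))·L^{III,(α)}_{m,n}(x) = (−1)^{n−m−1}·n·x·det M(x) + m!·(n−m−1)!·(∏_{1≤i<j≤n−1}(Z_j−Z_i))·(m+1)·C(n−m+α, n−m−1)·C(m−α−1, m+1); moreover the points Z_1,…,Z_{n−1} are pairwise distinct, so the Vandermonde factor is nonzero. -/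
open Finset

/-- Generalized Laguerre polynomial `L_n^{(α)}(x)` evaluated at complex `x`,
with the convention `L_n^{(α)} = 0` for negative integer index `n`. -/
noncomputable def laguerreC (α : ℝ) (n : ℤ) (x : ℂ) : ℂ :=
  if 0 ≤ n then
    ∑ k ∈ Finset.range (n.toNat + 1),
      ((-1 : ℂ) ^ k / (Nat.factorial k)) * (genBinom ((n : ℝ) + α) (n.toNat - k) : ℂ) * x ^ k
  else 0

/-- Type-III exceptional `X_m`-Laguerre polynomial (complex variable), for `n ≥ m + 1`. -/
noncomputable def XLagIIIC (m : ℕ) (α : ℝ) (n : ℕ) (x : ℂ) : ℂ :=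
  x * laguerreC (α + 2) ((n : ℤ) - m - 2) x * laguerreC (-α - 1) (m : ℤ) (-x)
    + ((m : ℂ) + 1) * laguerreC (-α - 2) ((m : ℤ) + 1) (-x) * laguerreC (α + 1) ((n : ℤ) - m - 1) x


open Polynomial in
noncomputable def lagP (a : ℝ) (n : ℕ) : ℂ[X] :=
  ∑ k ∈ Finset.range (n + 1),
    C (((-1 : ℂ) ^ k / (Nat.factorial k)) * (genBinom ((n : ℝ) + a) (n - k) : ℂ)) * X ^ k

theorem lagP_eval (a : ℝ) (n : ℕ) (x : ℂ) : (lagP a n).eval x = laguerreC a (n : ℤ) x := by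
  simp [lagP, laguerreC, Polynomial.eval_finsetSum]

theorem lagP_coeff (a : ℝ) (n k : ℕ) : (lagP a n).coeff k =
    if k ≤ n then ((-1 : ℂ) ^ k / (Nat.factorial k)) * (genBinom ((n : ℝ) + a) (n - k) : ℂ)
    else 0 := by
  simp only [lagP, Polynomial.finsetSum_coeff, Polynomial.coeff_C_mul, Polynomial.coeff_X_pow]
  simp [Nat.lt_succ_iff]

theorem genBinom_succ (t : ℝ) (j : ℕ) :
    ((j : ℝ) + 1) * genBinom t (j + 1) = (t - j) * genBinom t j := by
  unfold genBinom
  rw [Finset.prod_range_succ, Nat.factorial_succ]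
  have : (Nat.factorial j : ℝ) ≠ 0 := by positivity
  push_cast
  field_simp

theorem genBinom_zero (t : ℝ) : genBinom t 0 = 1 := by simp [genBinom]

theorem lagP_zero (a : ℝ) : lagP a 0 = 1 := by simp [lagP, genBinom_zero]

open Polynomial in
theorem lagP_deriv (a : ℝ) (n : ℕ) : derivative (lagP a (n + 1)) = - lagP (a + 1) n := by
  ext k
  rw [coeff_derivative, coeff_neg, lagP_coeff, lagP_coeff]
  by_cases h : k ≤ n
  · rw [if_pos h, if_pos (by omega)]
    have h1 : n + 1 - (k + 1) = n - k := by omega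
    have h2 : ((n + 1 : ℕ) : ℝ) + a = n + (a + 1) := by push_cast; ring
    have h3 : (Nat.factorial k : ℂ) ≠ 0 := by exact_mod_cast Nat.factorial_ne_zero k
    have h4 : (k : ℂ) + 1 ≠ 0 := by exact_mod_cast Nat.succ_ne_zero k
    rw [h1, h2, Nat.factorial_succ]
    push_cast
    field_simp
    ring
  · rw [if_neg h, if_neg (by omega)]; simp

open Polynomial in
theorem lagP_rec (a : ℝ) (n : ℕ) :
    X * derivative (lagP (a + 1) n) + (C ((a : ℂ) + 1) - X) * lagP (a + 1) n
      = C ((n : ℂ) + 1) * lagP a (n + 1) := by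
  have h2 : ((n + 1 : ℕ) : ℝ) + a = n + (a + 1) := by push_cast; ring
  ext k
  rw [sub_mul, coeff_add, coeff_sub, coeff_C_mul, coeff_C_mul]
  rcases k with _ | k
  · rw [mul_coeff_zero, mul_coeff_zero, lagP_coeff, lagP_coeff, h2]
    have := congrArg (fun x : ℝ => (x : ℂ)) (genBinom_succ (n + (a + 1)) n)
    push_cast at this
    simp
    rw [this]; ring
  · rw [coeff_X_mul, coeff_X_mul, coeff_derivative, lagP_coeff, lagP_coeff, lagP_coeff, h2]
    have h3 : (Nat.factorial k : ℂ) ≠ 0 := by exact_mod_cast Nat.factorial_ne_zero k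
    have h4 : (k : ℂ) + 1 ≠ 0 := by exact_mod_cast Nat.succ_ne_zero k
    rcases lt_trichotomy k n with h | h | h
    · obtain ⟨d, rfl⟩ := Nat.exists_eq_add_of_lt h
      have := congrArg (fun x : ℝ => (x : ℂ)) (genBinom_succ (((k + d + 1 : ℕ) : ℝ) + (a + 1)) d)
      push_cast at this
      rw [if_pos (by omega), if_pos (by omega), if_pos (by omega)]
      have e1 : k + d + 1 - (k + 1) = d := by omega
      have e2 : k + d + 1 - k = d + 1 := by omega
      have e3 : k + d + 1 + 1 - (k + 1) = d + 1 := by omega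
      rw [e1, e2, e3, Nat.factorial_succ]
      push_cast
      field_simp
      rw [pow_succ]
      linear_combination ((-1) ^ k) * this
    · subst h
      simp [genBinom_zero, Nat.factorial_succ]
      field_simp
      ring
    · rw [if_neg (by omega), if_neg (by omega), if_neg (by omega)]; simp

open Polynomial in
theorem lagP_ode (a : ℝ) (n : ℕ) :
    X * derivative (derivative (lagP a n)) + (C ((a : ℂ) + 1) - X) * derivative (lagP a n)
      + C (n : ℂ) * lagP a n = 0 := by
  rcases n with _ | n
  · simp [lagP_zero]
  · rw [lagP_deriv, derivative_neg]
    have := lagP_rec a n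
    push_cast
    linear_combination -this

open Polynomial in
theorem lagP_simple (n : ℕ) : ∀ (a : ℝ) (x : ℂ), x ≠ 0 → (lagP a n).eval x = 0 →
    (derivative (lagP a n)).eval x ≠ 0 := by
  induction n with
  | zero => intro a x _ h; simp [lagP_zero] at h
  | succ n ih =>
    intro a x hx h h'
    have h1 : (lagP (a + 1) n).eval x = 0 := by
      rw [lagP_deriv] at h'; simpa using h'
    apply ih (a + 1) x hx h1
    have := congrArg (eval x) (lagP_rec a n)
    simp [h, h1, hx] at this
    exact this

open Polynomial in
theorem lagP_re_pos (n : ℕ) : ∀ (a : ℝ), -1 < a → ∀ x : ℂ, (lagP a n).eval x = 0 → 0 < x.re := by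
  induction n with
  | zero => intro a _ x h; simp [lagP_zero] at h
  | succ n ih =>
    intro a ha x h
    by_contra! hx
    have ih' := ih (a + 1) (by linarith)
    have hq : (lagP (a + 1) n).eval x ≠ 0 := fun h0 => by linarith [ih' x h0]
    have hr := congrArg (eval x) (lagP_rec a n)
    simp [h] at hr
    have hl := (IsAlgClosed.splits (lagP (a + 1) n)).eval_derivative_div_eval_of_ne_zero hq
    have hx0 : x ≠ 0 := by
      rintro rfl
      simp [hq] at hr
      have : a + 1 = 0 := by exact_mod_cast hr
      linarith
    have h1 : (derivative (lagP (a + 1) n)).eval x / (lagP (a + 1) n).eval x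
        = 1 - ((a + 1 : ℝ) : ℂ) * x⁻¹ := by
      push_cast
      field_simp
      linear_combination hr
    have h2 : 1 ≤ (1 - ((a + 1 : ℝ) : ℂ) * x⁻¹).re := by
      rw [Complex.sub_re, Complex.re_ofReal_mul, Complex.inv_re, Complex.one_re]
      have : x.re / Complex.normSq x ≤ 0 := div_nonpos_of_nonpos_of_nonneg hx (Complex.normSq_nonneg x)
      nlinarith
    rw [← h1, hl] at h2
    have h3 : ((Multiset.map (fun z => 1 / (x - z)) (lagP (a + 1) n).roots).sum).re ≤ 0 := by
      have e : ((Multiset.map (fun z => 1 / (x - z)) (lagP (a + 1) n).roots).sum).re =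
        (Multiset.map (fun z => (1 / (x - z)).re) (lagP (a + 1) n).roots).sum := by
        have := (Multiset.map (fun z => 1 / (x - z)) (lagP (a + 1) n).roots).sum_hom Complex.reAddGroupHom
        simp only [Multiset.map_map] at this
        exact this.symm
      rw [e]
      have hneg : ∀ s : Multiset ℝ, (∀ w ∈ s, w ≤ 0) → s.sum ≤ 0 := fun s hs => by
        simpa using Multiset.sum_le_card_nsmul s 0 hs
      apply hneg
      intro w hw
      obtain ⟨z, hz, rfl⟩ := Multiset.mem_map.1 hw
      have hz0 := ih' z (isRoot_of_mem_roots hz)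
      rw [one_div, Complex.inv_re]
      apply div_nonpos_of_nonpos_of_nonneg _ (Complex.normSq_nonneg _)
      simp; linarith
    linarith

open Polynomial in
theorem lagP_roots_inj (a : ℝ) (ha : -1 < a) (n : ℕ) (c : ℂ) {p : ℕ} (y : Fin p → ℂ)
    (h : lagP a n = C c * ∏ j, (X - C (y j))) : Function.Injective y := by
  intro i j hij
  by_contra hne
  have h0 : (lagP a n).eval (y i) = 0 := by
    rw [h, eval_mul, eval_prod, Finset.prod_eq_zero (Finset.mem_univ i)] <;> simp
  have h1 : y i ≠ 0 := by
    intro h1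
    have := lagP_re_pos n a ha _ h0
    simp [h1] at this
  apply lagP_simple n a (y i) h1 h0
  rw [h, ← Finset.mul_prod_erase _ _ (Finset.mem_univ i),
    ← Finset.mul_prod_erase _ _ (Finset.mem_erase.2 ⟨Ne.symm hne, Finset.mem_univ j⟩)]
  simp [derivative_mul, hij]

theorem vdm_snoc {p : ℕ} (Z : Fin p → ℂ) (t : ℂ) :
    (Matrix.vandermonde (Fin.snoc Z t : Fin (p + 1) → ℂ)).det =
      (∏ i : Fin p, ∏ j ∈ Finset.Ioi i, (Z j - Z i)) * ∏ j, (t - Z j) := by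
  rw [Matrix.det_vandermonde, Fin.prod_univ_castSucc, ← Finset.prod_mul_distrib]
  have hl : Finset.Ioi (Fin.last p) = ∅ := by ext x; simp [Fin.le_last]
  rw [hl, Finset.prod_empty, mul_one]
  refine Finset.prod_congr rfl fun i _ => ?_
  have : Finset.Ioi (Fin.castSucc i) = insert (Fin.last p) ((Finset.Ioi i).map Fin.castSuccEmb) := by
    ext x
    refine Fin.lastCases ?_ (fun x => ?_) x
    · simp [Fin.castSucc_lt_last]
    · simp [Fin.castSucc_ne_last, Fin.le_last]
  rw [this, Finset.prod_insert (by simp [Fin.castSucc_ne_last]), Finset.prod_map, mul_comm]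
  simp

open Polynomial in
/-- cofactor expansion: integration of the Vandermonde determinant -/
theorem det_int (n : ℕ) (hn : 0 < n) (Z : Fin (n - 1) → ℂ) :
    ∃ Q : ℂ[X], Q.eval 0 = 0 ∧
      derivative Q = C (∏ i : Fin (n - 1), ∏ j ∈ Finset.Ioi i, (Z j - Z i)) * ∏ j, (X - C (Z j)) ∧
      ∀ w : ℂ, Q.eval w = w * (Matrix.of fun (i k : Fin n) =>
        if h : (i : ℕ) < n - 1 then (Z ⟨i, h⟩) ^ (k : ℕ)
        else w ^ (k : ℕ) / (((k : ℕ) : ℂ) + 1)).det := by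
  obtain ⟨p, rfl⟩ : ∃ p, n = p + 1 := ⟨n - 1, by omega⟩
  change Fin p → ℂ at Z
  let M0 : Matrix (Fin (p + 1)) (Fin (p + 1)) ℂ := Matrix.vandermonde (Fin.snoc Z 0 : Fin (p + 1) → ℂ)
  let c : Fin (p + 1) → ℂ := fun k => M0.adjugate k (Fin.last p)
  have key : ∀ r : Fin (p + 1) → ℂ, (M0.updateRow (Fin.last p) r).det = ∑ k, r k * c k := by
    intro r
    rw [Matrix.det_eq_sum_mul_adjugate_row _ (Fin.last p)]
    refine Finset.sum_congr rfl fun k _ => ?_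
    simp [c, Matrix.adjugate_apply]
  refine ⟨∑ k : Fin (p + 1), C (c k / ((k : ℕ) + 1)) * X ^ ((k : ℕ) + 1), ?_, ?_, ?_⟩
  · simp [eval_finsetSum]
  · apply Polynomial.funext
    intro t
    have h1 := vdm_snoc Z t
    have h2 : Matrix.vandermonde (Fin.snoc Z t : Fin (p + 1) → ℂ) =
        M0.updateRow (Fin.last p) (fun k => t ^ (k : ℕ)) := by
      ext i k
      refine Fin.lastCases ?_ (fun i => ?_) i
      · simp [Matrix.vandermonde_apply]
      · rw [Matrix.updateRow_ne (Fin.castSucc_ne_last i)]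
        simp [Matrix.vandermonde_apply, M0]
    rw [h2, key] at h1
    simp only [Nat.add_sub_cancel, eval_mul, eval_C, eval_prod, eval_sub, eval_X]
    refine Eq.trans ?_ h1
    simp only [derivative_sum, eval_finsetSum]
    refine Finset.sum_congr rfl fun k _ => ?_
    have h4 : ((k : ℕ) : ℂ) + 1 ≠ 0 := by exact_mod_cast Nat.succ_ne_zero k
    simp
    field_simp
  · intro w
    have h2 : (Matrix.of fun (i k : Fin (p + 1)) =>
        if h : (i : ℕ) < p + 1 - 1 then (Z ⟨i, h⟩) ^ (k : ℕ)
        else w ^ (k : ℕ) / (((k : ℕ) : ℂ) + 1)) =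
        M0.updateRow (Fin.last p) (fun k => w ^ (k : ℕ) / (((k : ℕ) : ℂ) + 1)) := by
      ext i k
      refine Fin.lastCases ?_ (fun i => ?_) i
      · simp
      · rw [Matrix.updateRow_ne (Fin.castSucc_ne_last i)]
        simp [Matrix.vandermonde_apply, M0]
    rw [h2, key, eval_finsetSum, Finset.mul_sum]
    refine Finset.sum_congr rfl fun k _ => ?_
    simp
    ring

open Polynomial in
/-- polynomial version of the type III exceptional Laguerre polynomial -/
noncomputable def xlagP (m : ℕ) (α : ℝ) (N : ℕ) : ℂ[X] :=
  -X * derivative (lagP (α + 1) N) * (lagP (-α - 1) m).comp (-X)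
    + C ((m : ℂ) + 1) * (lagP (-α - 2) (m + 1)).comp (-X) * lagP (α + 1) N

open Polynomial in
theorem xlagP_deriv (m : ℕ) (α : ℝ) (N : ℕ) : derivative (xlagP m α N) =
    C ((m : ℂ) + N + 1) * ((lagP (-α - 1) m).comp (-X) * lagP (α + 1) N) := by
  have e1 : -α - 2 + 1 = -α - 1 := by ring
  have hB := lagP_ode (α + 1) N
  have hd := lagP_deriv (-α - 2) m
  have hr := congrArg (fun p => p.comp (-X)) (lagP_rec (-α - 2) m)
  rw [e1] at hd hr
  simp only [add_comp, mul_comp, sub_comp, X_comp, C_comp] at hr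
  unfold xlagP
  simp only [derivative_add, derivative_mul, derivative_comp, hd, derivative_neg, derivative_X,
    derivative_C, neg_comp]
  generalize (lagP (-α - 1) m).comp (-X) = A at *
  generalize (derivative (lagP (-α - 1) m)).comp (-X) = A' at *
  generalize (lagP (-α - 2) (m + 1)).comp (-X) = K at *
  generalize lagP (α + 1) N = B at *
  simp only [map_add, map_one, map_sub, map_neg, Complex.ofReal_add, Complex.ofReal_sub,
    Complex.ofReal_neg, Complex.ofReal_one, Complex.ofReal_ofNat] at *
  have h2 : (C 2 : ℂ[X]) = 2 := rfl
  rw [h2] at hr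
  linear_combination (-A) * hB - derivative B * hr

theorem xlagP_eval (m : ℕ) (α : ℝ) (n : ℕ) (h : m < n) (w : ℂ) :
    (xlagP m α (n - m - 1)).eval w = XLagIIIC m α n w := by
  obtain ⟨N, rfl⟩ : ∃ N, n = m + N + 1 := ⟨n - m - 1, by omega⟩
  have e : m + N + 1 - m - 1 = N := by omega
  have e1 : ((m + N + 1 : ℕ) : ℤ) - m - 1 = (N : ℤ) := by push_cast; ring
  have e2 : ((m + N + 1 : ℕ) : ℤ) - m - 2 = (N : ℤ) - 1 := by push_cast; ring
  have e3 : α + 1 + 1 = α + 2 := by ring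
  unfold xlagP XLagIIIC
  rw [e, e1, e2, ← lagP_eval, ← lagP_eval]
  have e4 : laguerreC (-α - 2) ((m : ℤ) + 1) (-w) = (lagP (-α - 2) (m + 1)).eval (-w) := by
    rw [lagP_eval]; push_cast; rfl
  rw [e4]
  have e5 : laguerreC (α + 2) ((N : ℤ) - 1) w = - (Polynomial.derivative (lagP (α + 1) N)).eval w := by
    rcases N with _ | N
    · simp [laguerreC, lagP_zero]
    · rw [lagP_deriv, e3, Polynomial.eval_neg, lagP_eval]
      push_cast
      simp
  rw [e5]
  simp

theorem xlagP_eval_zero (m : ℕ) (α : ℝ) (N : ℕ) : (xlagP m α N).eval 0 =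
    ((m : ℂ) + 1) * (genBinom ((N : ℝ) + 1 + α) N : ℂ) * (genBinom ((m : ℝ) - α - 1) (m + 1) : ℂ) := by
  have h : ∀ a n, (lagP a n).eval 0 = (genBinom ((n : ℝ) + a) n : ℂ) := by
    intro a n
    rw [← Polynomial.coeff_zero_eq_eval_zero, lagP_coeff]
    simp
  have e1 : ((m + 1 : ℕ) : ℝ) + (-α - 2) = m - α - 1 := by push_cast; ring
  have e2 : (N : ℝ) + (α + 1) = N + 1 + α := by ring
  unfold xlagP
  simp only [Polynomial.eval_add, Polynomial.eval_mul, Polynomial.eval_neg, Polynomial.eval_X,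
    Polynomial.eval_comp, neg_zero, zero_mul, zero_add, Polynomial.eval_C, h, e1, e2]
  ring

theorem stmt7 (m : ℕ) (α : ℝ) (hα : α ∈ Set.Ioo (-1 : ℝ) 0) (n : ℕ) (hmn : m < n)
    (y : Fin m → ℂ) (z : Fin (n - m - 1) → ℂ)
    (hy : ∀ X : ℂ, laguerreC (-α - 1) (m : ℤ) X =
      ((-1 : ℂ) ^ m / (Nat.factorial m : ℂ)) * ∏ j, (X - y j))
    (hz : ∀ X : ℂ, laguerreC (α + 1) ((n : ℤ) - m - 1) X =
      ((-1 : ℂ) ^ (n - m - 1) / (Nat.factorial (n - m - 1) : ℂ)) * ∏ j, (X - z j))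
    (Z : Fin (n - 1) → ℂ)
    (hZ : Z = fun j => Fin.append (fun i => -y i) z
      (Fin.cast (show n - 1 = m + (n - m - 1) by omega) j))
    (M : ℂ → Matrix (Fin n) (Fin n) ℂ)
    (hM : ∀ w : ℂ, M w = Matrix.of fun (i k : Fin n) =>
      if h : (i : ℕ) < n - 1 then (Z ⟨i, h⟩) ^ (k : ℕ)
      else w ^ (k : ℕ) / (((k : ℕ) : ℂ) + 1)) :
    (∀ w : ℂ,
      (Nat.factorial m : ℂ) * (Nat.factorial (n - m - 1) : ℂ) *
          (∏ i : Fin (n - 1), ∏ j ∈ Finset.Ioi i, (Z j - Z i)) * XLagIIIC m α n w =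
        (-1 : ℂ) ^ (n - m - 1) * (n : ℂ) * w * (M w).det
          + (Nat.factorial m : ℂ) * (Nat.factorial (n - m - 1) : ℂ) *
              (∏ i : Fin (n - 1), ∏ j ∈ Finset.Ioi i, (Z j - Z i)) *
              ((m : ℂ) + 1) * (genBinom ((n : ℝ) - m + α) (n - m - 1) : ℂ) *
              (genBinom ((m : ℝ) - α - 1) (m + 1) : ℂ)) ∧
      Function.Injective Z := by
  have hN1 : (n : ℤ) - m - 1 = ((n - m - 1 : ℕ) : ℤ) := by omega
  have hNC : (n : ℂ) = (m : ℂ) + ((n - m - 1 : ℕ) : ℂ) + 1 := by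
    have : n = m + (n - m - 1) + 1 := by omega
    exact_mod_cast this
  have hNR : ((n : ℝ) - m + α) = ((n - m - 1 : ℕ) : ℝ) + 1 + α := by
    have : (n : ℝ) = (m : ℝ) + ((n - m - 1 : ℕ) : ℝ) + 1 := by
      have : n = m + (n - m - 1) + 1 := by omega
      exact_mod_cast this
    rw [this]; ring
  have hyP : lagP (-α - 1) m = Polynomial.C ((-1 : ℂ) ^ m / (Nat.factorial m : ℂ)) *
      ∏ j, (Polynomial.X - Polynomial.C (y j)) := by
    apply Polynomial.funext
    intro X
    rw [lagP_eval, hy]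
    simp [Polynomial.eval_prod]
  have hzP : lagP (α + 1) (n - m - 1) =
      Polynomial.C ((-1 : ℂ) ^ (n - m - 1) / (Nat.factorial (n - m - 1) : ℂ)) *
      ∏ j, (Polynomial.X - Polynomial.C (z j)) := by
    apply Polynomial.funext
    intro X
    rw [lagP_eval, ← hN1, hz]
    simp [Polynomial.eval_prod]
  have hnm : n - 1 = m + (n - m - 1) := by omega
  constructor
  · intro w
    obtain ⟨Q, hQ0, hQd, hQe⟩ := det_int n (by omega) Z
    have hprod : ∏ j, (Polynomial.X - Polynomial.C (Z j)) =
        (∏ j, (Polynomial.X + Polynomial.C (y j))) * ∏ j, (Polynomial.X - Polynomial.C (z j)) := by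
      rw [hZ, ← (finCongr hnm).symm.prod_comp, Fin.prod_univ_add]
      simp
    have hm : (Nat.factorial m : ℂ) ≠ 0 := by exact_mod_cast Nat.factorial_ne_zero m
    have hn : (Nat.factorial (n - m - 1) : ℂ) ≠ 0 := by
      exact_mod_cast Nat.factorial_ne_zero (n - m - 1)
    have hA : (lagP (-α - 1) m).comp (-Polynomial.X) =
        Polynomial.C (1 / (Nat.factorial m : ℂ)) *
          ∏ j, (Polynomial.X + Polynomial.C (y j)) := by
      apply Polynomial.funext
      intro X
      have : ∏ j, (-X - y j) = (-1) ^ m * ∏ j, (X + y j) := by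
        have h1 : ∀ j, -X - y j = (-1) * (X + y j) := fun j => by ring
        simp only [h1, Finset.prod_mul_distrib]
        simp
      have h2 : ((-1 : ℂ) ^ m) * (-1) ^ m = 1 := by rw [← mul_pow]; simp
      simp [hyP, Polynomial.eval_prod, this]
      field_simp
      linear_combination (∏ j, (X + y j)) * h2
    have hder := xlagP_deriv m α (n - m - 1)
    rw [← hNC, hA, hzP] at hder
    generalize hV : (∏ i : Fin (n - 1), ∏ j ∈ Finset.Ioi i, (Z j - Z i)) = V at *
    rw [hprod] at hQd
    have hz0 : Polynomial.derivative
        (Polynomial.C ((Nat.factorial m : ℂ) * (Nat.factorial (n - m - 1) : ℂ) * V)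
            * xlagP m α (n - m - 1)
          - Polynomial.C ((-1 : ℂ) ^ (n - m - 1) * (n : ℂ)) * Q) = 0 := by
      rw [Polynomial.derivative_sub, Polynomial.derivative_C_mul, Polynomial.derivative_C_mul,
        hder, hQd]
      apply Polynomial.funext
      intro t
      simp only [Polynomial.eval_sub, Polynomial.eval_mul, Polynomial.eval_C, Polynomial.eval_zero]
      field_simp
      ring
    have hc := Polynomial.eq_C_of_derivative_eq_zero hz0
    rw [Polynomial.coeff_zero_eq_eval_zero] at hc
    have hw := congrArg (Polynomial.eval w) hc
    simp only [Polynomial.eval_sub, Polynomial.eval_mul, Polynomial.eval_C, hQ0,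
      xlagP_eval m α n hmn, hQe] at hw
    rw [← xlagP_eval m α n hmn 0, xlagP_eval_zero] at hw
    rw [hM, hNR]
    linear_combination hw
  · have hyi := lagP_roots_inj _ (by linarith [hα.2]) _ _ y hyP
    have hzi := lagP_roots_inj _ (by linarith [hα.1]) _ _ z hzP
    have hypos : ∀ i, 0 < (y i).re := fun i =>
      lagP_re_pos m (-α - 1) (by linarith [hα.2]) _ (by
        rw [hyP, Polynomial.eval_mul, Polynomial.eval_prod,
          Finset.prod_eq_zero (Finset.mem_univ i)] <;> simp)
    have hzpos : ∀ i, 0 < (z i).re := fun i =>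
      lagP_re_pos (n - m - 1) (α + 1) (by linarith [hα.1]) _ (by
        rw [hzP, Polynomial.eval_mul, Polynomial.eval_prod,
          Finset.prod_eq_zero (Finset.mem_univ i)] <;> simp)
    have happ : Function.Injective (Fin.append (fun i => -y i) z) := by
      rw [Fin.append_injective_iff]
      refine ⟨fun i j h => hyi (neg_injective h), hzi, ?_⟩
      intro i j h
      have h1 := congrArg Complex.re h
      have := hypos i
      have := hzpos j
      simp at h1
      linarith
    rw [hZ]
    exact happ.comp (Fin.cast_injective hnm)
end

section
/- Let m ∈ ℕ and let α, β ∈ ℝ satisfy β > 0, α+1−m > 0, and α+1−m−β ∉ {0,1,…,m−1}, and let n ≥ m. Then for every x ∈ [−1,1], (α+n−m+1)·(x+1)^β·P^{(α,β)}_{m,n}(x) = (−1)^m·(β+n)·(α+n−2m+1)·∫_{−1}^x (t+1)^{β−1}·P_m^{(−α−1,β−1)}(t)·P_{n−m}^{(α+1,β−1)}(t) dt. -/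
open Finset MeasureTheory

/-- Jacobi polynomial `P_n^{(α,β)}(x)` for arbitrary real parameters, with the
convention `P_n^{(α,β)} = 0` for negative integer index `n`. -/
noncomputable def jacobi (α β : ℝ) (n : ℤ) (x : ℝ) : ℝ :=
  if 0 ≤ n then
    (Nat.factorial n.toNat : ℝ)⁻¹ *
      ∑ k ∈ Finset.range (n.toNat + 1),
        (n.toNat.choose k : ℝ) *
          (∏ i ∈ Finset.Ico k n.toNat, (α + i + 1)) *
          (∏ i ∈ Finset.range k, (α + β + (n : ℝ) + 1 + i)) *
          ((x - 1) / 2) ^ k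
  else 0

/-- Exceptional `X_m`-Jacobi polynomial. -/
noncomputable def XJac (m : ℕ) (α β : ℝ) (n : ℕ) (x : ℝ) : ℝ :=
  ((-1 : ℝ) ^ m / (α + 1 + n - m)) *
    ((x - 1) * (1 + α + β + n - m) / 2 *
        jacobi (-α - 1) (β - 1) (m : ℤ) x * jacobi (α + 2) β ((n : ℤ) - m - 1) x
      + (α + 1 - m) * jacobi (-α - 2) β (m : ℤ) x * jacobi (α + 1) (β - 1) ((n : ℤ) - m) x)

/-- Coefficients of the Jacobi polynomial in the variable `(x-1)/2`. -/
noncomputable def jcoef (a b : ℝ) (n k : ℕ) : ℝ :=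
  (Nat.factorial n : ℝ)⁻¹ * ((n.choose k : ℝ) *
    (∏ i ∈ Finset.Ico k n, (a + i + 1)) * (∏ i ∈ Finset.range k, (a + b + (n : ℝ) + 1 + i)))

/-- The Jacobi polynomial in the variable `(x-1)/2`. -/
noncomputable def jpoly (a b : ℝ) (n : ℕ) : Polynomial ℝ :=
  ∑ k ∈ Finset.range (n + 1), Polynomial.monomial k (jcoef a b n k)

lemma jpoly_coeff (a b : ℝ) (n k : ℕ) : (jpoly a b n).coeff k = jcoef a b n k := by
  unfold jpoly
  rw [Polynomial.finsetSum_coeff]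
  simp only [Polynomial.coeff_monomial]
  rw [Finset.sum_ite_eq']
  split_ifs with h
  · rfl
  · have : n < k := by simpa using h
    simp [jcoef, Nat.choose_eq_zero_of_lt this]

lemma jacobi_eq (a b : ℝ) (n : ℕ) (x : ℝ) :
    jacobi a b (n : ℤ) x = (jpoly a b n).eval ((x - 1) / 2) := by
  unfold jacobi jpoly
  simp only [Int.natCast_nonneg, if_true, Int.toNat_natCast, Int.cast_natCast]
  rw [Polynomial.eval_finsetSum, Finset.mul_sum]
  refine Finset.sum_congr rfl fun k _ => ?_
  rw [Polynomial.eval_monomial, jcoef]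
  ring

lemma jcoef_succ (a b : ℝ) (n k : ℕ) :
    ((k : ℝ) + 1) * (k + a + 1) * jcoef a b n (k + 1)
      = ((n : ℝ) - k) * (n + k + a + b + 1) * jcoef a b n k := by
  rcases lt_or_ge n k with h | h
  · simp [jcoef, Nat.choose_eq_zero_of_lt h, Nat.choose_eq_zero_of_lt (show n < k + 1 by omega)]
  rcases h.eq_or_lt with h | h
  · subst h
    simp [jcoef]
  have h1 : ((n.choose (k + 1) : ℕ) : ℝ) * (k + 1) = n.choose k * ((n : ℝ) - k) := by
    have := Nat.choose_succ_right_eq n k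
    rw [← Nat.cast_sub h.le]
    exact_mod_cast this
  unfold jcoef
  rw [Finset.prod_range_succ, Finset.prod_eq_prod_Ico_succ_bot h]
  linear_combination (k + a + 1) * (Nat.factorial n : ℝ)⁻¹ *
    (∏ i ∈ Finset.Ico (k + 1) n, (a + i + 1)) *
    (∏ i ∈ Finset.range k, (a + b + (n : ℝ) + 1 + i)) * (a + b + n + 1 + k) * h1

lemma jpoly_ode (a b : ℝ) (n : ℕ) (u : ℝ) :
    u * (1 + u) * (jpoly a b n).derivative.derivative.eval u
      + (a + 1 + (a + b + 2) * u) * (jpoly a b n).derivative.eval u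
      = n * (n + a + b + 1) * (jpoly a b n).eval u := by
  have key : Polynomial.X * (jpoly a b n).derivative.derivative
      + Polynomial.X * (Polynomial.X * (jpoly a b n).derivative.derivative)
      + Polynomial.C (a + 1) * (jpoly a b n).derivative
      + Polynomial.C (a + b + 2) * (Polynomial.X * (jpoly a b n).derivative)
      = Polynomial.C (n * (n + a + b + 1)) * jpoly a b n := by
    ext k
    simp only [Polynomial.coeff_add, Polynomial.coeff_C_mul]
    have h := jcoef_succ a b n k
    rcases k with _ | _ | k
    · simp [Polynomial.coeff_derivative, jpoly_coeff] at h ⊢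
      linear_combination h
    · simp [Polynomial.coeff_derivative, jpoly_coeff, Polynomial.coeff_X_mul] at h ⊢
      linear_combination h
    · simp [Polynomial.coeff_derivative, jpoly_coeff, Polynomial.coeff_X_mul] at h ⊢
      linear_combination h
  have := congrArg (Polynomial.eval u) key
  simp only [Polynomial.eval_add, Polynomial.eval_mul, Polynomial.eval_X, Polynomial.eval_C] at this
  linear_combination this

lemma jpoly_deriv (a b : ℝ) (n : ℕ) :
    (jpoly a b (n + 1)).derivative = Polynomial.C (a + b + n + 2) * jpoly (a + 1) (b + 1) n := by
  ext k
  rw [Polynomial.coeff_derivative, Polynomial.coeff_C_mul, jpoly_coeff, jpoly_coeff]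
  unfold jcoef
  have h1 : (((n + 1).choose (k + 1) : ℕ) : ℝ) * (k + 1) = (n + 1) * n.choose k := by
    exact_mod_cast (Nat.add_one_mul_choose_eq n k).symm
  have h2 : ∏ i ∈ Finset.Ico (k + 1) (n + 1), (a + (i : ℝ) + 1)
      = ∏ i ∈ Finset.Ico k n, (a + 1 + (i : ℝ) + 1) := by
    rw [← Finset.prod_Ico_add' (fun i : ℕ => a + (i : ℝ) + 1) k n 1]
    refine Finset.prod_congr rfl fun i _ => ?_
    push_cast; ring
  have h3 : ∏ i ∈ Finset.range (k + 1), (a + b + ((n + 1 : ℕ) : ℝ) + 1 + i)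
      = (a + b + n + 2) * ∏ i ∈ Finset.range k, (a + 1 + (b + 1) + (n : ℝ) + 1 + i) := by
    rw [Finset.prod_range_succ', mul_comm]
    congr 1
    · push_cast; ring
    · refine Finset.prod_congr rfl fun i _ => ?_
      push_cast; ring
  have h4 : (Nat.factorial (n + 1) : ℝ)⁻¹ * (n + 1) = (Nat.factorial n : ℝ)⁻¹ := by
    rw [Nat.factorial_succ]
    push_cast
    field_simp
  rw [h2, h3, ← h4]
  linear_combination (Nat.factorial (n + 1) : ℝ)⁻¹ *
    (∏ i ∈ Finset.Ico k n, (a + 1 + (i : ℝ) + 1)) * ((a + b + n + 2) *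
    ∏ i ∈ Finset.range k, (a + 1 + (b + 1) + (n : ℝ) + 1 + i)) * h1

lemma jpoly_contig (a b : ℝ) (n : ℕ) (u : ℝ) :
    (a + 1) * (jpoly (a + 1) (b - 1) n).eval u
      + u * (jpoly (a + 1) (b - 1) n).derivative.eval u
      = (a + n + 1) * (jpoly a b n).eval u := by
  have hc : ∀ k, (a + 1 + k) * jcoef (a + 1) (b - 1) n k = (a + n + 1) * jcoef a b n k := by
    intro k
    rcases lt_or_ge n k with h | h
    · simp [jcoef, Nat.choose_eq_zero_of_lt h]
    have h2 : (a + 1 + k) * ∏ i ∈ Finset.Ico k n, (a + 1 + (i : ℝ) + 1)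
        = (a + n + 1) * ∏ i ∈ Finset.Ico k n, (a + (i : ℝ) + 1) := by
      induction n, h using Nat.le_induction with
      | base => simp; ring
      | succ n hn ih =>
        rw [Finset.prod_Ico_succ_top hn, Finset.prod_Ico_succ_top hn]
        push_cast
        linear_combination (a + 1 + n + 1) * ih
    unfold jcoef
    have h3 : ∏ i ∈ Finset.range k, (a + 1 + (b - 1) + (n : ℝ) + 1 + i)
        = ∏ i ∈ Finset.range k, (a + b + (n : ℝ) + 1 + i) :=
      Finset.prod_congr rfl fun i _ => by ring
    rw [h3]
    linear_combination (Nat.factorial n : ℝ)⁻¹ * (n.choose k : ℝ) *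
      (∏ i ∈ Finset.range k, (a + b + (n : ℝ) + 1 + i)) * h2
  have key : Polynomial.C (a + 1) * jpoly (a + 1) (b - 1) n
      + Polynomial.X * (jpoly (a + 1) (b - 1) n).derivative
      = Polynomial.C (a + n + 1) * jpoly a b n := by
    ext k
    simp only [Polynomial.coeff_add, Polynomial.coeff_C_mul]
    have h := hc k
    rcases k with _ | k
    · simp [jpoly_coeff] at h ⊢
      linear_combination h
    · simp [Polynomial.coeff_derivative, jpoly_coeff, Polynomial.coeff_X_mul] at h ⊢
      linear_combination h
  have := congrArg (Polynomial.eval u) key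
  simp only [Polynomial.eval_add, Polynomial.eval_mul, Polynomial.eval_X, Polynomial.eval_C] at this
  exact this

/-- The derivative identity in polynomial form. -/
lemma wronskian_deriv (A B : Polynomial ℝ) (α β c lam mu : ℝ) (x : ℝ)
    (hB : ∀ u : ℝ, u * (1 + u) * B.derivative.derivative.eval u
      + (α + 2 + (α + β + 2) * u) * B.derivative.eval u = lam * B.eval u)
    (hA : ∀ u : ℝ, u * (1 + u) * A.derivative.derivative.eval u
      + (-α + (β - α) * u) * A.derivative.eval u = mu * A.eval u)
    (hc : c = β * (α + 1) + lam - mu) (hβ : 0 < β) (hx : -1 ≤ x) :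
    (x + 1) ^ β * (Polynomial.X * (A * B.derivative - A.derivative * B)
        + Polynomial.C (α + 1) * (A * B)).eval ((x - 1) / 2)
      = c * ∫ t in (-1 : ℝ)..x, (t + 1) ^ (β - 1) * A.eval ((t - 1) / 2) * B.eval ((t - 1) / 2) := by
  set K : Polynomial ℝ := Polynomial.X * (A * B.derivative - A.derivative * B)
        + Polynomial.C (α + 1) * (A * B) with hK
  have hcontK : ∀ P : Polynomial ℝ, Continuous fun t : ℝ => P.eval ((t - 1) / 2) := fun P =>
    P.continuous.comp (by fun_prop)
  have hid : ∀ u : ℝ, β * K.eval u + (1 + u) * K.derivative.eval u = c * (A.eval u * B.eval u) := by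
    intro u
    rw [hK, hc]
    simp only [Polynomial.derivative_add, Polynomial.derivative_sub, Polynomial.derivative_mul,
      Polynomial.derivative_X, Polynomial.derivative_C, Polynomial.eval_add, Polynomial.eval_sub,
      Polynomial.eval_mul, Polynomial.eval_X, Polynomial.eval_C, Polynomial.eval_one,
      Polynomial.eval_zero]
    linear_combination A.eval u * hB u - B.eval u * hA u
  have hint : IntervalIntegrable (fun t : ℝ => (t + 1) ^ (β - 1) * A.eval ((t - 1) / 2) *
      B.eval ((t - 1) / 2)) volume (-1) x := by
    have h0 : IntervalIntegrable (fun t : ℝ => t ^ (β - 1)) volume 0 (x + 1) :=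
      intervalIntegral.intervalIntegrable_rpow' (by linarith)
    have h1 := h0.comp_add_right 1
    simp only [zero_sub, add_sub_cancel_right] at h1
    exact (h1.mul_continuousOn (hcontK A).continuousOn).mul_continuousOn (hcontK B).continuousOn
  rw [← intervalIntegral.integral_const_mul]
  have hF := intervalIntegral.integral_eq_sub_of_hasDerivAt_of_le
    (f := fun t : ℝ => (t + 1) ^ β * K.eval ((t - 1) / 2))
    (f' := fun t : ℝ => c * ((t + 1) ^ (β - 1) * A.eval ((t - 1) / 2) * B.eval ((t - 1) / 2)))
    (a := -1) (b := x) hx ?_ ?_ (hint.const_mul c)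
  · rw [hF]
    simp [Real.zero_rpow hβ.ne']
  · refine Continuous.continuousOn (Continuous.mul ?_ (hcontK K))
    exact Continuous.rpow_const (by fun_prop) fun _ => Or.inr hβ.le
  · intro t ht
    have ht1 : 0 < t + 1 := by linarith [ht.1]
    have d1 : HasDerivAt (fun t : ℝ => (t + 1) ^ β) (1 * β * (t + 1) ^ (β - 1)) t :=
      ((hasDerivAt_id t).add_const 1).rpow_const (Or.inl ht1.ne')
    have d2 : HasDerivAt (fun t : ℝ => K.eval ((t - 1) / 2))
        (K.derivative.eval ((t - 1) / 2) * (1 / 2)) t :=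
      HasDerivAt.comp (h₂ := fun u : ℝ => K.eval u) (h := fun t : ℝ => (t - 1) / 2) t
        (K.hasDerivAt ((t - 1) / 2)) (((hasDerivAt_id t).sub_const 1).div_const 2)
    refine (d1.mul d2).congr_deriv ?_
    have h := hid ((t - 1) / 2)
    have hp : (t + 1) ^ β = (t + 1) ^ (β - 1) * (t + 1) := by
      rw [← Real.rpow_add_one ht1.ne']; congr 1; ring
    rw [hp]
    linear_combination (t + 1) ^ (β - 1) * h

theorem stmt8 (m : ℕ) (α β : ℝ) (hβ : 0 < β) (hα : 0 < α + 1 - m)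
    (hexc : ∀ k : ℕ, k < m → α + 1 - m - β ≠ k) (n : ℕ) (hmn : m ≤ n) :
    ∀ x ∈ Set.Icc (-1 : ℝ) 1,
      (α + n - m + 1) * (x + 1) ^ β * XJac m α β n x =
        (-1 : ℝ) ^ m * (β + n) * (α + n - 2 * m + 1) *
          ∫ t in (-1 : ℝ)..x,
            (t + 1) ^ (β - 1) * jacobi (-α - 1) (β - 1) (m : ℤ) t *
              jacobi (α + 1) (β - 1) ((n : ℤ) - m) t := by
  intro x hx
  obtain ⟨N, rfl⟩ := Nat.exists_eq_add_of_le hmn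
  have e1 : ((m + N : ℕ) : ℤ) - m = (N : ℤ) := by push_cast; ring
  have hpos : (0 : ℝ) < α + 1 + N := by
    have : (0 : ℝ) ≤ m := Nat.cast_nonneg m
    have : (0 : ℝ) ≤ N := Nat.cast_nonneg N
    linarith
  have hBd : (1 + α + β + N) * jacobi (α + 2) β ((N : ℤ) - 1) x
      = (jpoly (α + 1) (β - 1) N).derivative.eval ((x - 1) / 2) := by
    rcases N with _ | N
    · have : (jpoly (α + 1) (β - 1) 0) = Polynomial.C (jcoef (α + 1) (β - 1) 0 0) := by
        simp [jpoly]
      rw [this]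
      simp [jacobi]
    · have e2 : ((N + 1 : ℕ) : ℤ) - 1 = (N : ℤ) := by push_cast; ring
      rw [e2, jacobi_eq, jpoly_deriv, Polynomial.eval_mul, Polynomial.eval_C,
        show α + 1 + 1 = α + 2 by ring, show β - 1 + 1 = β by ring]
      push_cast
      ring
  have hC := jpoly_contig (-α - 2) β m ((x - 1) / 2)
  rw [show -α - 2 + 1 = -α - 1 by ring] at hC
  have main := wronskian_deriv (jpoly (-α - 1) (β - 1) m) (jpoly (α + 1) (β - 1) N) α β
    ((β + (m + N)) * (α + (m + N) - 2 * m + 1)) (N * (N + α + β + 1)) (m * (m + β - α - 1)) x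
    (fun u => by linear_combination jpoly_ode (α + 1) (β - 1) N u)
    (fun u => by linear_combination jpoly_ode (-α - 1) (β - 1) m u)
    (by ring) hβ hx.1
  simp only [Polynomial.eval_add, Polynomial.eval_sub, Polynomial.eval_mul, Polynomial.eval_X,
    Polynomial.eval_C] at main
  unfold XJac
  rw [e1]
  simp only [jacobi_eq]
  have e3 : α + 1 + ((m + N : ℕ) : ℝ) - m = α + 1 + N := by push_cast; ring
  have e4 : α + ((m + N : ℕ) : ℝ) - m + 1 = α + 1 + N := by push_cast; ring
  have e5 : 1 + α + β + ((m + N : ℕ) : ℝ) - m = 1 + α + β + N := by push_cast; ring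
  rw [e3, e4, e5]
  push_cast
  have hcancel : (α + 1 + N) * ((-1 : ℝ) ^ m / (α + 1 + N)) = (-1) ^ m := by
    field_simp
  rw [show ∀ p q r s : ℝ, p * q * (r * s) = (p * r) * (q * s) by intros; ring, hcancel,
    mul_assoc ((-1 : ℝ) ^ m), mul_assoc ((-1 : ℝ) ^ m), ← main]
  congr 2
  linear_combination (x - 1) / 2 * (jpoly (-α - 1) (β - 1) m).eval ((x - 1) / 2) * hBd
    + (jpoly (α + 1) (β - 1) N).eval ((x - 1) / 2) * hC
end
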